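/- arXiv:1405.6618 — 3 statements merged into one kernel-verified Lean document; each statement's English description precedes it below -/
import Mathlib

section
/- Let q, a, b, c be complex numbers and ℓ a nonnegative integer such that no denominator vanishes. Then the terminating very-well-poised 6phi5 sum: sum over i from 0 to ℓ of ((a;q)_i (1-a q^{2i})/(1-a)) * ((b;q)_i (c;q)_i (q^{-ℓ};q)_i) / ((q;q)_i (qa/b;q)_i (qa/c;q)_i (q^{1+ℓ}a;q)_i) * (q^{1+ℓ}a/(bc))^i equals ((qa;q)_ℓ (qa/(bc);q)_ℓ) / ((qa/b;q)_ℓ (qa/c;q)_ℓ). (Terminating 6phi5 summation.) -/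
/-- q-Pochhammer symbol `(a; q)_k`. -/
noncomputable def qpoch (a q : ℂ) (k : ℕ) : ℂ := ∏ j ∈ Finset.range k, (1 - a * q ^ j)

theorem qpoch_zero (a q : ℂ) : qpoch a q 0 = 1 := by simp [qpoch]

theorem qpoch_succ (a q : ℂ) (k : ℕ) : qpoch a q (k + 1) = qpoch a q k * (1 - a * q ^ k) := by
  simp [qpoch, Finset.prod_range_succ]

theorem qpoch_add (a q : ℂ) (m n : ℕ) :
    qpoch a q (m + n) = qpoch a q m * qpoch (a * q ^ m) q n := by
  simp only [qpoch, Finset.prod_range_add]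
  congr 1
  exact Finset.prod_congr rfl fun j _ => by ring

theorem qpoch_succ' (a q : ℂ) (k : ℕ) :
    qpoch a q (k + 1) = (1 - a) * qpoch (a * q) q k := by
  rw [add_comm, qpoch_add, qpoch_succ, qpoch_zero]
  simp

/-- The product `q ^ (ℓ i) (q ^ (-ℓ); q)_i`, written without negative powers. -/
noncomputable def qfall (q : ℂ) (ℓ i : ℕ) : ℂ := ∏ j ∈ Finset.range i, (q ^ ℓ - q ^ j)

theorem qfall_zero (q : ℂ) (ℓ : ℕ) : qfall q ℓ 0 = 1 := by simp [qfall]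

theorem qfall_succ (q : ℂ) (ℓ i : ℕ) :
    qfall q ℓ (i + 1) = qfall q ℓ i * (q ^ ℓ - q ^ i) := by
  simp [qfall, Finset.prod_range_succ]

theorem qfall_succ_succ (q : ℂ) (ℓ i : ℕ) :
    qfall q (ℓ + 1) (i + 1) = (q ^ (ℓ + 1) - 1) * q ^ i * qfall q ℓ i := by
  induction i with
  | zero => simp [qfall]
  | succ i ih => rw [qfall_succ, ih, qfall_succ]; ring

theorem qfall_eq_zero (q : ℂ) {ℓ i : ℕ} (h : ℓ < i) : qfall q ℓ i = 0 :=
  Finset.prod_eq_zero (Finset.mem_range.2 h) (sub_self _)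

theorem qpoch_neg_mul_pow {q : ℂ} (hq : q ≠ 0) (ℓ i : ℕ) :
    qpoch (q ^ (-(ℓ : ℤ))) q i * (q ^ ℓ) ^ i = qfall q ℓ i := by
  induction i with
  | zero => simp [qpoch, qfall]
  | succ i ih =>
    rw [qpoch_succ, qfall_succ, ← ih, pow_succ, zpow_neg, zpow_natCast]
    field_simp

/-- The part of the very-well-poised summand that does not depend on `ℓ`; here `y = q a / (b c)`,
so that `q a / b = y c` and `q a / c = y b`. -/
noncomputable def wellPoisedWeight (q a b c y : ℂ) (i : ℕ) : ℂ :=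
  qpoch a q i * ((1 - a * q ^ (2 * i)) / (1 - a)) * (qpoch b q i * qpoch c q i) /
    (qpoch q q i * qpoch (y * c) q i * qpoch (y * b) q i) * y ^ i

theorem qpoch_ne_zero_of_le {a q : ℂ} {m n : ℕ} (h : qpoch a q n ≠ 0) (hmn : m ≤ n) :
    qpoch a q m ≠ 0 := by
  obtain ⟨k, rfl⟩ := Nat.exists_eq_add_of_le hmn
  rw [qpoch_add] at h
  exact left_ne_zero_of_mul h

/-- The telescoping identity behind the recurrence in `ℓ`. -/
theorem sum_wellPoisedWeight_telescope {q a b c y : ℂ} {ℓ : ℕ} (hq : q ≠ 0) (ha : 1 - a ≠ 0)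
    (hy : q * a = y * b * c) (h₁ : qpoch q q (ℓ + 1) ≠ 0) (h₂ : qpoch (y * c) q (ℓ + 1) ≠ 0)
    (h₃ : qpoch (y * b) q (ℓ + 1) ≠ 0) (n : ℕ) (hn : n ≤ ℓ + 1) :
    ∑ i ∈ Finset.range (n + 1), wellPoisedWeight q a b c y i *
        qpoch (a * q ^ (ℓ + 2 + i)) q (ℓ + 1 - i) *
        ((1 - y * c * q ^ ℓ) * (1 - y * b * q ^ ℓ) * qfall q (ℓ + 1) i -
          (1 - y * q ^ ℓ) * (1 - a * q ^ (ℓ + 1 + i)) * qfall q ℓ i) =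
      q ^ ℓ * y ^ (n + 1) * qpoch (a * q) q n * qpoch b q (n + 1) * qpoch c q (n + 1) /
        (qpoch q q n * qpoch (y * c) q n * qpoch (y * b) q n) * qfall q ℓ n *
        qpoch (a * q ^ (ℓ + 2 + n)) q (ℓ + 1 - n) := by
  have hy' : a = y * b * c / q := by rw [eq_div_iff hq, ← hy, mul_comm]
  induction n with
  | zero =>
    simp only [zero_add, Finset.sum_range_one, wellPoisedWeight, qpoch_zero, qfall_zero, qpoch_succ]
    have : (1 - a * q ^ (2 * 0)) / (1 - a) = 1 := by simp [div_self ha]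
    rw [this]
    have : a * q ^ (ℓ + 1 + 0) = y * b * c * q ^ ℓ := by rw [← hy]; ring
    rw [this]
    ring
  | succ n ih =>
    rw [Finset.sum_range_succ, ih (by omega)]
    have e : ℓ + 1 - n = (ℓ + 1 - (n + 1)) + 1 := by omega
    rw [e, qpoch_succ' (a * q ^ (ℓ + 2 + n))]
    have e' : a * q ^ (ℓ + 2 + n) * q = a * q ^ (ℓ + 2 + (n + 1)) := by ring
    rw [e']
    generalize qpoch (a * q ^ (ℓ + 2 + (n + 1))) q (ℓ + 1 - (n + 1)) = R
    have g₁ := qpoch_ne_zero_of_le h₁ hn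
    have g₂ := qpoch_ne_zero_of_le h₂ hn
    have g₃ := qpoch_ne_zero_of_le h₃ hn
    rw [wellPoisedWeight, qfall_succ_succ, qfall_succ, qpoch_succ' a, qpoch_succ (a * q),
      qpoch_succ b q (n + 1), qpoch_succ c q (n + 1)]
    rw [qpoch_succ] at g₁ g₂ g₃
    rw [qpoch_succ q, qpoch_succ (y * c), qpoch_succ (y * b)]
    obtain ⟨k₁, f₁⟩ := mul_ne_zero_iff.1 g₁
    obtain ⟨k₂, f₂⟩ := mul_ne_zero_iff.1 g₂
    obtain ⟨k₃, f₃⟩ := mul_ne_zero_iff.1 g₃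
    have key : q ^ ℓ * y * (1 - a * q * q ^ n) * (1 - b * q ^ (n + 1)) * (1 - c * q ^ (n + 1)) *
          (q ^ ℓ - q ^ n) -
        q ^ ℓ * (1 - q * q ^ n) * (1 - y * c * q ^ n) * (1 - y * b * q ^ n) *
          (1 - a * q ^ (ℓ + 2 + n)) =
        (1 - a * q ^ (2 * (n + 1))) * ((1 - y * c * q ^ ℓ) * (1 - y * b * q ^ ℓ) *
          ((q ^ (ℓ + 1) - 1) * q ^ n) -
          (1 - y * q ^ ℓ) * (1 - a * q ^ (ℓ + 1 + (n + 1))) * (q ^ ℓ - q ^ n)) := by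
      rw [hy']
      simp only [pow_add, pow_mul']
      field_simp
      ring
    generalize qpoch q q n = Q at *
    generalize qpoch (y * c) q n = C' at *
    generalize qpoch (y * b) q n = B' at *
    generalize 1 - q * q ^ n = u₁ at *
    generalize 1 - y * c * q ^ n = u₂ at *
    generalize 1 - y * b * q ^ n = u₃ at *
    generalize 1 - a * q ^ (2 * (n + 1)) = u₄ at *
    generalize 1 - a * q ^ (ℓ + 1 + (n + 1)) = u₅ at *
    generalize 1 - a * q ^ (ℓ + 2 + n) = u₆ at *
    generalize 1 - a = u₇ at *
    generalize 1 - a * q * q ^ n = u₈ at *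
    generalize qpoch b q (n + 1) = B at *
    generalize qpoch c q (n + 1) = C at *
    generalize 1 - b * q ^ (n + 1) = u₉ at *
    generalize 1 - c * q ^ (n + 1) = v₁ at *
    generalize q ^ (ℓ + 1) - 1 = v₂ at *
    generalize 1 - y * c * q ^ ℓ = v₃ at *
    generalize 1 - y * b * q ^ ℓ = v₄ at *
    generalize 1 - y * q ^ ℓ = v₅ at *
    generalize q ^ ℓ - q ^ n = v₆ at *
    generalize qpoch (a * q) q n = A at *
    generalize qfall q ℓ n = F at *
    generalize q ^ n = p at *
    generalize q ^ ℓ = L at *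
    rw [eq_comm, ← sub_eq_zero]
    have : L * y ^ (n + 1 + 1) * (A * u₈) * (B * u₉) * (C * v₁) /
          (Q * u₁ * (C' * u₂) * (B' * u₃)) * (F * v₆) * R -
        (L * y ^ (n + 1) * A * B * C / (Q * C' * B') * F * (u₆ * R) +
          u₇ * A * (u₄ / u₇) * (B * C) / (Q * u₁ * (C' * u₂) * (B' * u₃)) * y ^ (n + 1) * R *
            (v₃ * v₄ * (v₂ * p * F) - v₅ * u₅ * (F * v₆))) =
        y ^ (n + 1) * A * B * C * F * R / (Q * u₁ * (C' * u₂) * (B' * u₃)) *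
          (L * y * u₈ * u₉ * v₁ * v₆ - L * u₁ * u₂ * u₃ * u₆ -
            u₄ * (v₃ * v₄ * (v₂ * p) - v₅ * u₅ * v₆)) := by
      field_simp
      ring
    rw [this, key, sub_self, mul_zero]

theorem qpoch_mul_qfall_shift (q a : ℂ) {ℓ i : ℕ} (hi : i ≤ ℓ + 1) :
    (1 - a * q ^ (2 * ℓ + 1)) * (1 - a * q ^ (2 * ℓ + 2)) *
        (qpoch (a * q ^ (ℓ + 1 + i)) q (ℓ - i) * qfall q ℓ i) =
      qpoch (a * q ^ (ℓ + 2 + i)) q (ℓ + 1 - i) * ((1 - a * q ^ (ℓ + 1 + i)) * qfall q ℓ i) := by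
  rcases hi.eq_or_lt with rfl | hi
  · simp [qfall_eq_zero]
  · obtain ⟨k, rfl⟩ := Nat.exists_eq_add_of_le (Nat.lt_succ_iff.1 hi)
    have h := qpoch_succ' (a * q ^ (i + k + 1 + i)) q (k + 1)
    rw [qpoch_succ, qpoch_succ] at h
    have e₁ : i + k - i = k := by omega
    have e₂ : i + k + 1 - i = k + 1 := by omega
    rw [e₁, e₂]
    have e₃ : a * q ^ (i + k + 1 + i) * q = a * q ^ (i + k + 2 + i) := by ring
    rw [e₃] at h
    linear_combination qfall q (i + k) i * h

/-- The summation with the factor `(q ^ (ℓ + 1) a; q)_ℓ` cleared from the denominators. -/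
theorem sum_wellPoisedWeight {q a b c y : ℂ} (hq : q ≠ 0) (ha : 1 - a ≠ 0)
    (hy : q * a = y * b * c) (ℓ : ℕ) (h₁ : qpoch q q ℓ ≠ 0) (h₂ : qpoch (y * c) q ℓ ≠ 0)
    (h₃ : qpoch (y * b) q ℓ ≠ 0) :
    (∑ i ∈ Finset.range (ℓ + 1), wellPoisedWeight q a b c y i *
        (qpoch (a * q ^ (ℓ + 1 + i)) q (ℓ - i) * qfall q ℓ i)) *
      (qpoch (y * c) q ℓ * qpoch (y * b) q ℓ) = qpoch (a * q) q (2 * ℓ) * qpoch y q ℓ := by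
  induction ℓ with
  | zero => simp [wellPoisedWeight, qpoch_zero, qfall_zero, div_self ha]
  | succ ℓ ih =>
    have ih := ih (qpoch_ne_zero_of_le h₁ ℓ.le_succ) (qpoch_ne_zero_of_le h₂ ℓ.le_succ)
      (qpoch_ne_zero_of_le h₃ ℓ.le_succ)
    have tel := sum_wellPoisedWeight_telescope hq ha hy h₁ h₂ h₃ (ℓ + 1) le_rfl
    rw [qfall_eq_zero q ℓ.lt_succ_self, mul_zero, zero_mul] at tel
    have hrec : (1 - y * c * q ^ ℓ) * (1 - y * b * q ^ ℓ) *
          (∑ i ∈ Finset.range (ℓ + 1 + 1), wellPoisedWeight q a b c y i *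
            (qpoch (a * q ^ (ℓ + 1 + 1 + i)) q (ℓ + 1 - i) * qfall q (ℓ + 1) i)) -
        (1 - y * q ^ ℓ) * ((1 - a * q ^ (2 * ℓ + 1)) * (1 - a * q ^ (2 * ℓ + 2))) *
          (∑ i ∈ Finset.range (ℓ + 1 + 1), wellPoisedWeight q a b c y i *
            (qpoch (a * q ^ (ℓ + 1 + i)) q (ℓ - i) * qfall q ℓ i)) = 0 := by
      rw [← tel, Finset.mul_sum, Finset.mul_sum, ← Finset.sum_sub_distrib]
      refine Finset.sum_congr rfl fun i hi => ?_
      have := qpoch_mul_qfall_shift q a (Nat.lt_succ_iff.1 (Finset.mem_range.1 hi))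
      linear_combination -(1 - y * q ^ ℓ) * wellPoisedWeight q a b c y i * this
    rw [Finset.sum_range_succ _ (ℓ + 1), Finset.sum_range_succ _ (ℓ + 1),
      qfall_eq_zero q ℓ.lt_succ_self, mul_zero, mul_zero, add_zero,
      ← Finset.sum_range_succ _ (ℓ + 1)] at hrec
    rw [show 2 * (ℓ + 1) = 2 * ℓ + 1 + 1 by ring]
    simp only [qpoch_succ _ _ ℓ, qpoch_succ _ _ (2 * ℓ), qpoch_succ _ _ (2 * ℓ + 1)]
    linear_combination (qpoch (y * c) q ℓ * qpoch (y * b) q ℓ) * hrec +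
      (1 - y * q ^ ℓ) * ((1 - a * q ^ (2 * ℓ + 1)) * (1 - a * q ^ (2 * ℓ + 2))) * ih

theorem terminating_6phi5 (ℓ : ℕ) (q a b c : ℂ) (hq : q ≠ 0)
    (ha : (1 : ℂ) - a ≠ 0) (hb : b ≠ 0) (hc : c ≠ 0)
    (hden : ∀ i ≤ ℓ,
      qpoch q q i * qpoch (q*a/b) q i * qpoch (q*a/c) q i * qpoch (q^(1+ℓ)*a) q i ≠ 0)
    (hden2 : qpoch (q*a/b) q ℓ * qpoch (q*a/c) q ℓ ≠ 0) :
    ∑ i ∈ Finset.range (ℓ+1),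
      qpoch a q i * ((1 - a * q^(2*i)) / (1 - a)) *
        (qpoch b q i * qpoch c q i * qpoch (q ^ (-(ℓ : ℤ))) q i) /
        (qpoch q q i * qpoch (q*a/b) q i * qpoch (q*a/c) q i * qpoch (q^(1+ℓ)*a) q i) *
        (q^(1+ℓ)*a/(b*c))^i
      = (qpoch (q*a) q ℓ * qpoch (q*a/(b*c)) q ℓ) /
          (qpoch (q*a/b) q ℓ * qpoch (q*a/c) q ℓ) := by
  have h := hden ℓ le_rfl
  obtain ⟨⟨⟨h₁, h₂⟩, h₃⟩, h₄⟩ : ((qpoch q q ℓ ≠ 0 ∧ qpoch (q * a / b) q ℓ ≠ 0) ∧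
      qpoch (q * a / c) q ℓ ≠ 0) ∧ qpoch (q ^ (1 + ℓ) * a) q ℓ ≠ 0 := by
    simpa only [mul_ne_zero_iff] using h
  obtain ⟨y, hy⟩ : ∃ y, y = q * a / (b * c) := ⟨_, rfl⟩
  have hyc : q * a / b = y * c := by rw [hy]; field_simp
  have hyb : q * a / c = y * b := by rw [hy]; field_simp
  have hybc : q * a = y * b * c := by rw [hy]; field_simp
  rw [hyc] at h₂
  rw [hyb] at h₃
  have hsum := sum_wellPoisedWeight hq ha hybc ℓ h₁ h₂ h₃
  rw [two_mul, qpoch_add, mul_comm a q] at hsum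
  have hx : q * a * q ^ ℓ = q ^ (1 + ℓ) * a := by ring
  rw [hx] at hsum
  rw [hyc, hyb, ← hy, eq_div_iff (mul_ne_zero h₂ h₃), ← mul_left_inj' h₄]
  refine Eq.trans ?_ (hsum.trans (by ring))
  rw [mul_right_comm, Finset.sum_mul]
  congr 1
  refine Finset.sum_congr rfl fun i hi => ?_
  have hi : i ≤ ℓ := Nat.lt_succ_iff.1 (Finset.mem_range.1 hi)
  have k₄ := qpoch_ne_zero_of_le h₄ hi
  have hsplit : qpoch (q ^ (1 + ℓ) * a) q ℓ =
      qpoch (q ^ (1 + ℓ) * a) q i * qpoch (a * q ^ (ℓ + 1 + i)) q (ℓ - i) := by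
    have e := qpoch_add (q ^ (1 + ℓ) * a) q i (ℓ - i)
    rw [Nat.add_sub_cancel' hi] at e
    rw [e, show q ^ (1 + ℓ) * a * q ^ i = a * q ^ (ℓ + 1 + i) by ring]
  have hpow : q ^ (1 + ℓ) * a / (b * c) = q ^ ℓ * y := by rw [hy]; ring
  rw [hsplit, hpow, ← qpoch_neg_mul_pow hq, wellPoisedWeight, mul_pow]
  generalize qpoch (q ^ (1 + ℓ) * a) q i = K at *
  have k₁ := qpoch_ne_zero_of_le h₁ hi
  have k₂ := qpoch_ne_zero_of_le h₂ hi
  have k₃ := qpoch_ne_zero_of_le h₃ hi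
  field_simp
end

section
/- For every nonnegative integer ℓ, nonnegative integer n, and complex number x such that no denominator vanishes: sum over k from 0 to n of ((3x)_k (1-ℓ-3x)_k (-n)_k)/(k! (1/2)_k (-3n)_k) * (3/4)^k equals ((3x)_ℓ/(6x)_ℓ) * sum over i from 0 to ℓ of (-1)^i * (6x+2i-1)/(6x-1) * ((-ℓ)_i (6x-1)_i)/(i! (6x+ℓ)_i) * (((1+i)/3 + x)_n ((2-i)/3 - x)_n)/((1/3)_n (2/3)_n). (Generalization of Gosper's first identity with an extra integer parameter.) -/
/-- Pochhammer symbol (rising factorial) `(a)_k`. -/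
noncomputable def poch (a : ℂ) (k : ℕ) : ℂ := ∏ j ∈ Finset.range k, (a + j)

theorem poch_zero (a : ℂ) : poch a 0 = 1 := by simp [poch]

theorem poch_succ (a : ℂ) (k : ℕ) : poch a (k + 1) = poch a k * (a + k) := by
  simp [poch, Finset.prod_range_succ]

theorem poch_add (a : ℂ) (m k : ℕ) : poch a (m + k) = poch a m * poch (a + m) k := by
  simp [poch, Finset.prod_range_add, add_assoc]

theorem poch_succ_left (a : ℂ) (k : ℕ) : poch a (k + 1) = a * poch (a + 1) k := by
  rw [add_comm, poch_add]
  simp [poch]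

theorem poch_ne_zero_iff (a : ℂ) (k : ℕ) : poch a k ≠ 0 ↔ ∀ j < k, a + j ≠ 0 := by
  simp [poch, Finset.prod_ne_zero_iff]

theorem poch_neg_natCast_mul_factorial (N k : ℕ) (h : k ≤ N) :
    poch (-(N : ℂ)) k * ((N - k).factorial : ℂ) = (-1) ^ k * (N.factorial : ℂ) := by
  induction k with
  | zero => simp [poch_zero]
  | succ k ih =>
    obtain ⟨d, rfl⟩ := Nat.exists_eq_add_of_le h
    have e1 : k + 1 + d - k = d + 1 := by omega
    have e2 : k + 1 + d - (k + 1) = d := by omega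
    have ih := ih (by omega)
    rw [e1, Nat.factorial_succ] at ih
    rw [e2, poch_succ, pow_succ]
    push_cast at ih ⊢
    linear_combination (-1 : ℂ) * ih

theorem factorial_two_mul_eq_poch (k : ℕ) :
    ((2 * k).factorial : ℂ) = 4 ^ k * (k.factorial : ℂ) * poch (1 / 2) k := by
  induction k with
  | zero => simp [poch_zero]
  | succ k ih =>
    rw [show 2 * (k + 1) = 2 * k + 1 + 1 by ring, Nat.factorial_succ, Nat.factorial_succ,
      Nat.factorial_succ, poch_succ]
    push_cast
    rw [ih]
    ring

theorem factorial_three_mul_eq_poch (n : ℕ) :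
    ((3 * n).factorial : ℂ) = 27 ^ n * (n.factorial : ℂ) * (poch (1 / 3) n * poch (2 / 3) n) := by
  induction n with
  | zero => simp [poch_zero]
  | succ n ih =>
    rw [show 3 * (n + 1) = 3 * n + 1 + 1 + 1 by ring, Nat.factorial_succ, Nat.factorial_succ,
      Nat.factorial_succ, Nat.factorial_succ, poch_succ, poch_succ]
    push_cast
    rw [ih]
    ring

/-- The coefficients `3^k (3n-k)! / ((2k)! (n-k)!)` of the cleared form of Gosper's sum,
extended by zero to `k > n`. -/
noncomputable def gosperCoeff (n k : ℕ) : ℂ :=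
  if k ≤ n then 3 ^ k * ((3 * n - k).factorial : ℂ) / (((2 * k).factorial : ℂ) *
    ((n - k).factorial : ℂ)) else 0

theorem gosperCoeff_add (k d : ℕ) : gosperCoeff (k + d) k =
    3 ^ k * ((2 * k + 3 * d).factorial : ℂ) / (((2 * k).factorial : ℂ) * (d.factorial : ℂ)) := by
  rw [gosperCoeff, if_pos (by omega), show 3 * (k + d) - k = 2 * k + 3 * d by omega,
    Nat.add_sub_cancel_left]

theorem gosperCoeff_of_lt {n k : ℕ} (h : n < k) : gosperCoeff n k = 0 :=
  if_neg (by omega)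

theorem gosperCoeff_succ_zero (n : ℕ) :
    gosperCoeff (n + 1) 0 = 3 * ((3 * n + 1) * (3 * n + 2)) * gosperCoeff n 0 := by
  have h := gosperCoeff_add 0 n
  have h' := gosperCoeff_add 0 (n + 1)
  rw [Nat.zero_add] at h h'
  rw [h, h', show 2 * 0 + 3 * (n + 1) = 2 * 0 + 3 * n + 1 + 1 + 1 by ring, Nat.factorial_succ,
    Nat.factorial_succ, Nat.factorial_succ, Nat.factorial_succ]
  have h1 : (n.factorial : ℂ) ≠ 0 := by exact_mod_cast n.factorial_ne_zero
  have h2 : (n : ℂ) + 1 ≠ 0 := by exact_mod_cast n.succ_ne_zero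
  push_cast
  simp only [Nat.factorial_zero, Nat.cast_one, one_mul, pow_zero, zero_add]
  field_simp
  ring

theorem gosperCoeff_succ_succ (n k : ℕ) (hk : k ≤ n) :
    gosperCoeff (n + 1) (k + 1) = 3 * (gosperCoeff n k +
      ((3 * n + 1) * (3 * n + 2) - (k + 1) * (k + 2)) * gosperCoeff n (k + 1)) := by
  have h1 : ((2 * k).factorial : ℂ) ≠ 0 := by exact_mod_cast Nat.factorial_ne_zero _
  have h2 : (2 * k : ℂ) + 1 ≠ 0 := by exact_mod_cast (2 * k).succ_ne_zero
  have h3 : (2 * k : ℂ) + 1 + 1 ≠ 0 := by exact_mod_cast (2 * k + 1).succ_ne_zero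
  obtain ⟨d, rfl⟩ := Nat.exists_eq_add_of_le hk
  have e := gosperCoeff_add (k + 1) d
  rw [show k + 1 + d = k + d + 1 by ring] at e
  rw [e, gosperCoeff_add k d]
  rcases d with _ | d
  · rw [gosperCoeff_of_lt (by omega)]
    simp only [show 2 * (k + 1) = 2 * k + 1 + 1 by ring, Nat.factorial_succ, mul_zero, add_zero,
      Nat.factorial_zero, Nat.cast_one, mul_one, pow_succ]
    push_cast
    field_simp
  · have e' := gosperCoeff_add (k + 1) d
    rw [show k + 1 + d = k + (d + 1) by ring] at e'
    rw [e']
    have h4 : (d.factorial : ℂ) ≠ 0 := by exact_mod_cast Nat.factorial_ne_zero _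
    have h5 : (d : ℂ) + 1 ≠ 0 := by exact_mod_cast d.succ_ne_zero
    rw [show 2 * (k + 1) + 3 * (d + 1) = 2 * k + 3 * d + 1 + 1 + 1 + 1 + 1 by ring,
      show 2 * k + 3 * (d + 1) = 2 * k + 3 * d + 1 + 1 + 1 by ring,
      show 2 * (k + 1) + 3 * d = 2 * k + 3 * d + 1 + 1 by ring,
      show 2 * (k + 1) = 2 * k + 1 + 1 by ring]
    simp only [Nat.factorial_succ, pow_succ]
    push_cast
    field_simp
    ring

theorem sum_gosperCoeff (n : ℕ) (y : ℂ) :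
    ∑ k ∈ Finset.range (n + 1), gosperCoeff n k * (poch y k * poch (1 - y) k) =
      27 ^ n * (poch ((1 + y) / 3) n * poch ((2 - y) / 3) n) := by
  induction n with
  | zero => simp [poch_zero, gosperCoeff]
  | succ n ih =>
    have split : ∑ k ∈ Finset.range (n + 1 + 1), gosperCoeff (n + 1) k *
        (poch y k * poch (1 - y) k) =
        3 * ((1 + y + 3 * n) * (2 - y + 3 * n)) *
          ∑ k ∈ Finset.range (n + 1), gosperCoeff n k * (poch y k * poch (1 - y) k) := by
      have shift : ∑ k ∈ Finset.range (n + 1), ((3 * n + 1) * (3 * n + 2) - k * (k + 1)) *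
            gosperCoeff n k * (poch y k * poch (1 - y) k) =
          ∑ k ∈ Finset.range (n + 1), ((3 * n + 1) * (3 * n + 2) - (k + 1) * (k + 2)) *
            gosperCoeff n (k + 1) * (poch y (k + 1) * poch (1 - y) (k + 1)) +
          (3 * n + 1) * (3 * n + 2) * gosperCoeff n 0 := by
        have h := Finset.sum_range_succ' (fun k : ℕ =>
          ((3 * n + 1) * (3 * n + 2) - (k : ℂ) * (k + 1)) *
            gosperCoeff n k * (poch y k * poch (1 - y) k)) (n + 1)
        rw [Finset.sum_range_succ, gosperCoeff_of_lt (Nat.lt_succ_self n)] at h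
        simp only [mul_zero, zero_mul, add_zero, poch_zero, Nat.cast_zero, sub_zero, mul_one] at h
        rw [h]
        congr 1
        refine Finset.sum_congr rfl fun k _ => ?_
        push_cast
        ring
      have mid : ∑ k ∈ Finset.range (n + 1), gosperCoeff (n + 1) (k + 1) *
            (poch y (k + 1) * poch (1 - y) (k + 1)) =
          3 * (∑ k ∈ Finset.range (n + 1), gosperCoeff n k *
            (poch y (k + 1) * poch (1 - y) (k + 1)) +
          ∑ k ∈ Finset.range (n + 1), ((3 * n + 1) * (3 * n + 2) - (k + 1) * (k + 2)) *
            gosperCoeff n (k + 1) * (poch y (k + 1) * poch (1 - y) (k + 1))) := by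
        rw [← Finset.sum_add_distrib, Finset.mul_sum]
        refine Finset.sum_congr rfl fun k hk => ?_
        rw [gosperCoeff_succ_succ n k (by have := Finset.mem_range.1 hk; omega)]
        ring
      have comb : (1 + y + 3 * n) * (2 - y + 3 * n) *
            ∑ k ∈ Finset.range (n + 1), gosperCoeff n k * (poch y k * poch (1 - y) k) =
          ∑ k ∈ Finset.range (n + 1), gosperCoeff n k *
            (poch y (k + 1) * poch (1 - y) (k + 1)) +
          ∑ k ∈ Finset.range (n + 1), ((3 * n + 1) * (3 * n + 2) - k * (k + 1)) *
            gosperCoeff n k * (poch y k * poch (1 - y) k) := by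
        rw [← Finset.sum_add_distrib, Finset.mul_sum]
        refine Finset.sum_congr rfl fun k _ => ?_
        rw [poch_succ, poch_succ]
        ring
      rw [Finset.sum_range_succ', mid, gosperCoeff_succ_zero, poch_zero, poch_zero]
      linear_combination (-3 : ℂ) * comb - 3 * shift
    rw [split, ih, poch_succ, poch_succ]
    ring

/-- Gosper's first identity. -/
theorem gosper_first (n : ℕ) (y : ℂ) :
    ∑ k ∈ Finset.range (n + 1), (poch y k * poch (1 - y) k * poch (-(n : ℂ)) k) /
        ((Nat.factorial k : ℂ) * poch (1 / 2) k * poch (-(3 * n : ℂ)) k) * (3 / 4 : ℂ) ^ k =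
      (poch ((1 + y) / 3) n * poch ((2 - y) / 3) n) / (poch (1 / 3) n * poch (2 / 3) n) := by
  have hn : (n.factorial : ℂ) ≠ 0 := by exact_mod_cast n.factorial_ne_zero
  have h3n : ((3 * n).factorial : ℂ) ≠ 0 := by exact_mod_cast Nat.factorial_ne_zero _
  have hsum := sum_gosperCoeff n y
  have hfac := factorial_three_mul_eq_poch n
  have hP : poch (1 / 3) n * poch (2 / 3) n ≠ 0 := fun h => h3n (by rw [hfac, h, mul_zero])
  have key : ∑ k ∈ Finset.range (n + 1), (poch y k * poch (1 - y) k * poch (-(n : ℂ)) k) /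
        ((Nat.factorial k : ℂ) * poch (1 / 2) k * poch (-(3 * n : ℂ)) k) * (3 / 4 : ℂ) ^ k =
      (n.factorial : ℂ) / ((3 * n).factorial : ℂ) *
        ∑ k ∈ Finset.range (n + 1), gosperCoeff n k * (poch y k * poch (1 - y) k) := by
    rw [Finset.mul_sum]
    refine Finset.sum_congr rfl fun k hk => ?_
    have hkn : k ≤ n := by have := Finset.mem_range.1 hk; omega
    have h1 := poch_neg_natCast_mul_factorial n k hkn
    have h2 := poch_neg_natCast_mul_factorial (3 * n) k (by omega)
    have h3 := factorial_two_mul_eq_poch k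
    have f1 : ((n - k).factorial : ℂ) ≠ 0 := by exact_mod_cast Nat.factorial_ne_zero _
    have f2 : ((3 * n - k).factorial : ℂ) ≠ 0 := by exact_mod_cast Nat.factorial_ne_zero _
    have f3 : ((2 * k).factorial : ℂ) ≠ 0 := by exact_mod_cast Nat.factorial_ne_zero _
    have f4 : (k.factorial : ℂ) ≠ 0 := by exact_mod_cast Nat.factorial_ne_zero _
    have f5 : poch (1 / 2) k ≠ 0 := fun h => f3 (by rw [h3, h, mul_zero])
    rw [← eq_div_iff f1] at h1
    rw [← eq_div_iff f2] at h2
    push_cast at h2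
    rw [gosperCoeff, if_pos hkn, h1, h2, h3, div_pow]
    field_simp
  rw [key, hsum, hfac]
  field_simp

/-- The connection coefficients expressing `(y)_k (1-ℓ-y)_k` through the products
`(y+i)_k (1-y-i)_k`. -/
noncomputable def connCoeff (ℓ : ℕ) (y : ℂ) (i : ℕ) : ℂ :=
  (ℓ.choose i : ℂ) * poch y ℓ * (2 * y + 2 * i - 1) / poch (2 * y - 1 + i) (ℓ + 1)

theorem poch_ne_zero_of_le {y : ℂ} {ℓ : ℕ} (h : ∀ j ≤ 2 * ℓ, 2 * y - 1 + (j : ℂ) ≠ 0)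
    {i m : ℕ} (hm : i + m ≤ 2 * ℓ + 1) : poch (2 * y - 1 + i) m ≠ 0 := by
  rw [poch_ne_zero_iff]
  intro j hj
  have := h (i + j) (by omega)
  push_cast at this
  rwa [← add_assoc] at this

theorem connCoeff_succ_zero (ℓ : ℕ) (y : ℂ)
    (h : ∀ j ≤ 2 * (ℓ + 1), 2 * y - 1 + (j : ℂ) ≠ 0) :
    connCoeff (ℓ + 1) y 0 = (y + ℓ) / (2 * y + ℓ) * connCoeff ℓ y 0 := by
  have h1 : poch (2 * y - 1 + (0 : ℕ)) (ℓ + 1) ≠ 0 := poch_ne_zero_of_le h (by omega)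
  have h2 : 2 * y + ℓ ≠ 0 := by
    have := h (ℓ + 1) (by omega)
    push_cast at this
    convert this using 1
    ring
  have e : 2 * y - 1 + ((0 : ℕ) : ℂ) + ((ℓ + 1 : ℕ) : ℂ) = 2 * y + ℓ := by push_cast; ring
  simp only [connCoeff, Nat.choose_zero_right]
  rw [poch_succ _ (ℓ + 1), poch_succ y, e]
  field_simp

theorem connCoeff_succ_succ (ℓ i : ℕ) (y : ℂ) (hi : i ≤ ℓ)
    (h : ∀ j ≤ 2 * (ℓ + 1), 2 * y - 1 + (j : ℂ) ≠ 0) :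
    connCoeff (ℓ + 1) y (i + 1) = (y + ℓ) / (2 * y + ℓ) * connCoeff ℓ y (i + 1) +
      y / (2 * y + ℓ) * connCoeff ℓ (y + 1) i := by
  have h2 : 2 * y + ℓ ≠ 0 := by
    have := h (ℓ + 1) (by omega)
    push_cast at this
    convert this using 1
    ring
  have h3 : 2 * y + i ≠ 0 := by
    have := h (i + 1) (by omega)
    push_cast at this
    convert this using 1
    ring
  have h4 : 2 * y + i + ℓ + 1 ≠ 0 := by
    have := h (i + ℓ + 2) (by omega)
    push_cast at this
    convert this using 1
    ring
  have h5 : poch (2 * y + i + 1) ℓ ≠ 0 := by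
    have := poch_ne_zero_of_le h (show (i + 2) + ℓ ≤ 2 * (ℓ + 1) + 1 by omega)
    convert this using 2
    push_cast
    ring
  have e1 : 2 * y - 1 + ((i + 1 : ℕ) : ℂ) = 2 * y + i := by push_cast; ring
  have e2 : 2 * (y + 1) - 1 + (i : ℂ) = 2 * y + i + 1 := by ring
  have e3 : 2 * y + i + 1 + ((ℓ : ℕ) : ℂ) = 2 * y + i + ℓ + 1 := by ring
  have d1 : poch (2 * y + i) (ℓ + 1) = (2 * y + i) * poch (2 * y + i + 1) ℓ := poch_succ_left _ _
  have d2 : poch (2 * y + i + 1) (ℓ + 1) = poch (2 * y + i + 1) ℓ * (2 * y + i + ℓ + 1) := by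
    rw [poch_succ, e3]
  have d3 : poch (2 * y + i) (ℓ + 1 + 1) =
      (2 * y + i) * (poch (2 * y + i + 1) ℓ * (2 * y + i + ℓ + 1)) := by
    rw [poch_succ_left, d2]
  have n1 : poch y (ℓ + 1) = poch y ℓ * (y + ℓ) := poch_succ _ _
  have n2 : y * poch (y + 1) ℓ = poch y ℓ * (y + ℓ) := by rw [← poch_succ_left, n1]
  have hc : (ℓ.choose (i + 1) : ℂ) * (i + 1) = ℓ.choose i * (ℓ - i) := by
    have := Nat.choose_succ_right_eq ℓ i
    rw [← Nat.cast_sub hi]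
    exact_mod_cast this
  have e4 : 2 * (y + 1) + 2 * (i : ℂ) - 1 = 2 * y + 2 * ((i : ℂ) + 1) - 1 := by ring
  have pascal : ((ℓ.choose i : ℂ) + ℓ.choose (i + 1)) * (2 * y + ℓ) =
      ℓ.choose (i + 1) * (2 * y + i + ℓ + 1) + ℓ.choose i * (2 * y + i) := by
    linear_combination -hc
  simp only [connCoeff, e1, e2, d1, d2, d3, n1, Nat.choose_succ_succ]
  push_cast
  rw [e4]
  generalize 2 * y + 2 * ((i : ℂ) + 1) - 1 = w
  generalize poch (2 * y + i + 1) ℓ = q at h5 ⊢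
  generalize 2 * y + (i : ℂ) + ℓ + 1 = t at h4 pascal ⊢
  generalize 2 * y + (i : ℂ) = a at h3 pascal ⊢
  generalize 2 * y + (ℓ : ℂ) = d at h2 pascal ⊢
  calc
    _ = poch y ℓ * (y + ℓ) * w / (d * a * q * t) *
        (((ℓ.choose i : ℂ) + ℓ.choose (i + 1)) * d) := by field_simp
    _ = (y + ℓ) / d * (ℓ.choose (i + 1) * poch y ℓ * w / (a * q)) +
        ℓ.choose i * (poch y ℓ * (y + ℓ)) * w / (d * (q * t)) := by
      rw [pascal]
      field_simp
    _ = _ := by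
      rw [← n2]
      field_simp

theorem poch_mul_poch_succ (ℓ k : ℕ) (y : ℂ) :
    (2 * y + ℓ) * (poch y k * poch (-ℓ - y) k) =
      (y + ℓ) * (poch y k * poch (1 - ℓ - y) k) +
        y * (poch (y + 1) k * poch (-ℓ - y) k) := by
  have h1 : y * poch (y + 1) k = poch y k * (y + k) := by rw [← poch_succ_left, poch_succ]
  have h2 : (-ℓ - y) * poch (1 - ℓ - y) k = poch (-ℓ - y) k * (-ℓ - y + k) := by
    rw [← poch_succ, poch_succ_left]
    congr 2
    ring
  linear_combination poch y k * h2 - poch (-ℓ - y) k * h1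

theorem poch_mul_poch_eq_sum (ℓ k : ℕ) (y : ℂ)
    (h : ∀ j ≤ 2 * ℓ, 2 * y - 1 + (j : ℂ) ≠ 0) :
    poch y k * poch (1 - ℓ - y) k = ∑ i ∈ Finset.range (ℓ + 1),
      connCoeff ℓ y i * (poch (y + i) k * poch (1 - (y + i)) k) := by
  induction ℓ generalizing y with
  | zero =>
    have := h 0 le_rfl
    simp only [Nat.cast_zero, add_zero] at this
    simp [connCoeff, poch_zero, poch_succ, div_self this]
  | succ ℓ ih =>
    have h2 : 2 * y + ℓ ≠ 0 := by
      have := h (ℓ + 1) (by omega)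
      push_cast at this
      convert this using 1
      ring
    have ih1 := ih y fun j hj => h j (by omega)
    have ih2 := ih (y + 1) fun j hj => by
      have := h (j + 2) (by omega)
      push_cast at this
      convert this using 1
      ring
    rw [show (1 : ℂ) - ℓ - (y + 1) = -ℓ - y by ring] at ih2
    have top : ∑ i ∈ Finset.range (ℓ + 1),
          connCoeff ℓ y i * (poch (y + i) k * poch (1 - (y + i)) k) =
        ∑ i ∈ Finset.range (ℓ + 1), connCoeff ℓ y (i + 1) *
          (poch (y + (i + 1 : ℕ)) k * poch (1 - (y + (i + 1 : ℕ))) k) +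
        connCoeff ℓ y 0 * (poch (y + (0 : ℕ)) k * poch (1 - (y + (0 : ℕ))) k) := by
      rw [← Finset.sum_range_succ' (fun i : ℕ =>
        connCoeff ℓ y i * (poch (y + i) k * poch (1 - (y + i)) k)), Finset.sum_range_succ _ (ℓ + 1)]
      simp [connCoeff]
    have expand : ∑ i ∈ Finset.range (ℓ + 1), connCoeff (ℓ + 1) y (i + 1) *
          (poch (y + (i + 1 : ℕ)) k * poch (1 - (y + (i + 1 : ℕ))) k) =
        (y + ℓ) / (2 * y + ℓ) * ∑ i ∈ Finset.range (ℓ + 1), connCoeff ℓ y (i + 1) *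
          (poch (y + (i + 1 : ℕ)) k * poch (1 - (y + (i + 1 : ℕ))) k) +
        y / (2 * y + ℓ) * ∑ i ∈ Finset.range (ℓ + 1), connCoeff ℓ (y + 1) i *
          (poch (y + 1 + i) k * poch (1 - (y + 1 + i)) k) := by
      rw [Finset.mul_sum, Finset.mul_sum, ← Finset.sum_add_distrib]
      refine Finset.sum_congr rfl fun i hi => ?_
      rw [connCoeff_succ_succ ℓ i y (by have := Finset.mem_range.1 hi; omega) h,
        show y + ((i + 1 : ℕ) : ℂ) = y + 1 + i by push_cast; ring]
      ring
    rw [top] at ih1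
    rw [Finset.sum_range_succ', expand, connCoeff_succ_zero ℓ y h, ← ih2, mul_assoc,
      add_right_comm, ← mul_add, ← ih1,
      show (1 : ℂ) - ((ℓ + 1 : ℕ) : ℂ) - y = -ℓ - y by push_cast; ring]
    apply mul_left_cancel₀ h2
    rw [poch_mul_poch_succ]
    generalize 2 * y + (ℓ : ℂ) = d at h2 ⊢
    field_simp

theorem connCoeff_eq (ℓ i : ℕ) (y : ℂ) (hi : i ≤ ℓ)
    (h : ∀ j ≤ 2 * ℓ, 2 * y - 1 + (j : ℂ) ≠ 0) :
    connCoeff ℓ y i = poch y ℓ / poch (2 * y) ℓ *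
      ((-1 : ℂ) ^ i * ((2 * y + 2 * i - 1) / (2 * y - 1)) *
        (poch (-(ℓ : ℂ)) i * poch (2 * y - 1) i) /
        ((Nat.factorial i : ℂ) * poch (2 * y + ℓ) i)) := by
  have f1 : ((ℓ - i).factorial : ℂ) ≠ 0 := by exact_mod_cast Nat.factorial_ne_zero _
  have f2 : (i.factorial : ℂ) ≠ 0 := by exact_mod_cast Nat.factorial_ne_zero _
  have hch : (ℓ.factorial : ℂ) = ℓ.choose i * i.factorial * (ℓ - i).factorial := by
    exact_mod_cast (Nat.choose_mul_factorial_mul_factorial hi).symm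
  have h1 := poch_neg_natCast_mul_factorial ℓ i hi
  rw [hch, ← mul_assoc, ← mul_assoc] at h1
  replace h1 := mul_right_cancel₀ f1 h1
  have hd : poch (2 * y - 1) i * poch (2 * y - 1 + i) (ℓ + 1) =
      (2 * y - 1) * (poch (2 * y) ℓ * poch (2 * y + ℓ) i) := by
    rw [← poch_add, ← poch_add, add_comm i, add_right_comm, poch_succ_left, sub_add_cancel]
  have g1 : poch (2 * y - 1 + i) (ℓ + 1) ≠ 0 := poch_ne_zero_of_le h (by omega)
  have g2 : poch (2 * y - 1) i ≠ 0 := by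
    simpa using poch_ne_zero_of_le (i := 0) (m := i) h (by omega)
  have g3 : (2 * y - 1) * (poch (2 * y) ℓ * poch (2 * y + ℓ) i) ≠ 0 := hd ▸ mul_ne_zero g2 g1
  have g4 : 2 * y - 1 ≠ 0 := left_ne_zero_of_mul g3
  have g5 : poch (2 * y) ℓ ≠ 0 := left_ne_zero_of_mul (right_ne_zero_of_mul g3)
  have g6 : poch (2 * y + ℓ) i ≠ 0 := right_ne_zero_of_mul (right_ne_zero_of_mul g3)
  have hs : (-1 : ℂ) ^ i * (-1) ^ i = 1 := by rw [← mul_pow]; simp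
  rw [h1, connCoeff, div_eq_iff g1]
  field_simp
  linear_combination
    (-(ℓ.choose i : ℂ) * poch y ℓ * (2 * y + 2 * i - 1)) * hd -
      ((ℓ.choose i : ℂ) * poch y ℓ * (2 * y + 2 * i - 1) *
        (poch (2 * y - 1) i * poch (2 * y - 1 + i) (ℓ + 1))) * hs

theorem gosper_first_extension (ℓ n : ℕ) (x : ℂ)
    (h6x : 6*x - 1 ≠ 0) (h6xℓ : poch (6*x) ℓ ≠ 0)
    (hdeni : ∀ i ≤ ℓ, poch (6*x + ℓ) i ≠ 0)
    (hden : ∀ k ≤ n, poch (1/2) k ≠ 0 ∧ poch (-(3*n : ℂ)) k ≠ 0)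
    (h13 : poch (1/3) n ≠ 0) (h23 : poch (2/3) n ≠ 0) :
    ∑ k ∈ Finset.range (n+1),
      (poch (3*x) k * poch (1 - ℓ - 3*x) k * poch (-(n : ℂ)) k) /
        ((Nat.factorial k : ℂ) * poch (1/2) k * poch (-(3*n : ℂ)) k) * (3/4 : ℂ)^k
      = poch (3*x) ℓ / poch (6*x) ℓ *
        ∑ i ∈ Finset.range (ℓ+1),
          (-1 : ℂ)^i * ((6*x + 2*i - 1) / (6*x - 1)) *
            (poch (-(ℓ : ℂ)) i * poch (6*x - 1) i) /
            ((Nat.factorial i : ℂ) * poch (6*x + ℓ) i) *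
            ((poch ((1 + i)/3 + x) n * poch ((2 - i)/3 - x) n) /
              (poch (1/3) n * poch (2/3) n)) := by
  have hne : ∀ j ≤ 2 * ℓ, 2 * (3 * x) - 1 + (j : ℂ) ≠ 0 := by
    have hP : poch (2 * (3 * x) - 1) (2 * ℓ + 1) ≠ 0 := by
      rw [poch_succ_left, two_mul ℓ, poch_add,
        show 2 * (3 * x) - 1 + 1 = 6 * x by ring, show 2 * (3 * x) - 1 = 6 * x - 1 by ring]
      exact mul_ne_zero h6x (mul_ne_zero h6xℓ (hdeni ℓ le_rfl))
    intro j hj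
    exact (poch_ne_zero_iff _ _).1 hP j (by omega)
  calc
    _ = ∑ k ∈ Finset.range (n + 1), ∑ i ∈ Finset.range (ℓ + 1), connCoeff ℓ (3 * x) i *
          ((poch (3 * x + i) k * poch (1 - (3 * x + i)) k * poch (-(n : ℂ)) k) /
            ((Nat.factorial k : ℂ) * poch (1 / 2) k * poch (-(3 * n : ℂ)) k) *
              (3 / 4 : ℂ) ^ k) := by
      refine Finset.sum_congr rfl fun k _ => ?_
      rw [poch_mul_poch_eq_sum ℓ k (3 * x) hne, Finset.sum_mul, Finset.sum_div, Finset.sum_mul]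
      exact Finset.sum_congr rfl fun i _ => by ring
    _ = _ := by
      rw [Finset.sum_comm, Finset.mul_sum]
      refine Finset.sum_congr rfl fun i hi => ?_
      rw [← Finset.mul_sum, gosper_first,
        connCoeff_eq ℓ i (3 * x) (by have := Finset.mem_range.1 hi; omega) hne,
        show 2 * (3 * x) = 6 * x by ring,
        show (1 + (3 * x + i)) / 3 = (1 + i) / 3 + x by ring,
        show (2 - (3 * x + i)) / 3 = (2 - i) / 3 - x by ring]
      ring
end

section
/- For every nonnegative integer n and complex number x with 6x-1 != 0: sum over k from 0 to n of ((3x)_k (-3x)_k (-n)_k)/(k! (1/2)_k (-3n)_k) * (3/4)^k equals (1/2) * ((1/3+x)_n (2/3-x)_n)/((1/3)_n (2/3)_n) + (1/2) * ((2/3+x)_n (1/3-x)_n)/((1/3)_n (2/3)_n). -/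
theorem poch_mul_add (a : ℂ) (k : ℕ) : poch a k * (a + k) = a * poch (a + 1) k := by
  induction k with
  | zero => simp [poch_zero]
  | succ k ih =>
    rw [poch_succ, poch_succ, ih]
    push_cast
    ring

theorem poch_ne_zero {a : ℂ} {k : ℕ} (h : ∀ j < k, a + j ≠ 0) : poch a k ≠ 0 :=
  Finset.prod_ne_zero_iff.mpr fun j hj => h j (Finset.mem_range.mp hj)

theorem poch_neg_natCast_succ (n : ℕ) : poch (-(n : ℂ)) (n + 1) = 0 := by
  rw [poch_succ]; simp

theorem poch_ne_zero_of_pos {r : ℝ} (hr : 0 < r) (k : ℕ) : poch (r : ℂ) k ≠ 0 :=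
  poch_ne_zero fun j _ => by
    have h : (r + j : ℝ) ≠ 0 := by positivity
    exact_mod_cast h

theorem poch_third_ne_zero (k : ℕ) : poch (1 / 3) k ≠ 0 := by
  simpa using poch_ne_zero_of_pos (r := 1 / 3) (by norm_num) k

theorem poch_two_thirds_ne_zero (k : ℕ) : poch (2 / 3) k ≠ 0 := by
  simpa using poch_ne_zero_of_pos (r := 2 / 3) (by norm_num) k

/-- The `k`-th term of `₃F₂(a, b, c; 1/2, d; 3/4)`. -/
noncomputable def gosperTerm (a b c d : ℂ) (k : ℕ) : ℂ :=
  (poch a k * poch b k * poch c k) / ((Nat.factorial k : ℂ) * poch (1 / 2) k * poch d k)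
    * (3 / 4 : ℂ) ^ k

theorem gosperTerm_succ (a b c d : ℂ) (k : ℕ) :
    gosperTerm a b c d (k + 1) = gosperTerm a b c d k *
      ((a + k) * (b + k) * (c + k) / ((k + 1) * (1 / 2 + k) * (d + k)) * (3 / 4)) := by
  simp only [gosperTerm, poch_succ, Nat.factorial_succ, pow_succ]
  push_cast
  simp only [div_eq_mul_inv, mul_inv]
  ring

theorem gosperTerm_numerator_shift {c : ℂ} (hc : c ≠ 0) (a b d : ℂ) (k : ℕ) :
    gosperTerm a b (c + 1) d k = gosperTerm a b c d k * ((c + k) / c) := by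
  have h : poch (c + 1) k = poch c k * (c + k) / c := by
    rw [poch_mul_add]; field_simp
  simp only [gosperTerm, h]
  ring

theorem gosperTerm_denominator_shift {d : ℂ} {k : ℕ} (hk : d + k ≠ 0) (a b c : ℂ) :
    gosperTerm a b c d k = gosperTerm a b c (d + 1) k * ((d + k) / d) := by
  have h : poch d k = d * poch (d + 1) k / (d + k) := by
    rw [← poch_mul_add]; field_simp
  simp only [gosperTerm, h, div_eq_mul_inv, mul_inv, inv_inv]
  ring

theorem gosperTerm_neg_natCast_succ (a b d : ℂ) (n : ℕ) :
    gosperTerm a b (-(n : ℂ)) d (n + 1) = 0 := by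
  simp [gosperTerm, poch_neg_natCast_succ]

theorem sum_gosperTerm_recurrence_partial (a : ℂ) {n : ℕ} (hn : 1 ≤ n) (m : ℕ)
    (hm : m ≤ n + 2) :
    ∑ k ∈ Finset.range m,
      ((n + 1 / 3) * (n + 2 / 3) *
          gosperTerm a (1 - a) (-((n + 1 : ℕ) : ℂ)) (-(3 * (n + 1 : ℕ) : ℂ)) k
        - (n + 1 / 3 + a / 3) * (n + 2 / 3 - a / 3) *
          gosperTerm a (1 - a) (-(n : ℂ)) (-(3 * n : ℂ)) k)
      = gosperTerm a (1 - a) (-((n + 1 : ℕ) : ℂ)) (-(3 * n : ℂ)) m *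
          (4 * m * (m - 1 / 2) * (m - 3 * n - 1) / (27 * (n + 1))) := by
  induction m with
  | zero => simp
  | succ k ih =>
    have cast_ne : ∀ p q : ℕ, p ≠ q → (p : ℂ) - q ≠ 0 := fun p q h =>
      sub_ne_zero.mpr (Nat.cast_injective.ne h)
    have e0 := cast_ne k (3 * n) (by omega)
    have e1 := cast_ne k (3 * n + 1) (by omega)
    have e2 := cast_ne k (3 * n + 2) (by omega)
    have e3 := cast_ne k (3 * n + 3) (by omega)
    have p0 : (n : ℂ) + 1 ≠ 0 := by exact_mod_cast Nat.succ_ne_zero n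
    have p1 : (3 * n : ℂ) + 1 ≠ 0 := by exact_mod_cast Nat.succ_ne_zero (3 * n)
    have p2 : (3 * n : ℂ) + 2 ≠ 0 := by exact_mod_cast Nat.succ_ne_zero (3 * n + 1)
    have hk1 : (k : ℂ) + 1 ≠ 0 := by exact_mod_cast Nat.succ_ne_zero k
    have hk2 : (1 : ℂ) + k * 2 ≠ 0 := by
      rw [add_comm]; exact_mod_cast Nat.succ_ne_zero (k * 2)
    push_cast at e0 e1 e2 e3
    have hnum : gosperTerm a (1 - a) (-(n : ℂ)) (-(3 * n : ℂ)) k =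
        gosperTerm a (1 - a) (-((n : ℂ) + 1)) (-(3 * n : ℂ)) k * ((n + 1 - k) / (n + 1)) := by
      have h := gosperTerm_numerator_shift (neg_ne_zero.mpr p0) a (1 - a) (-(3 * n : ℂ)) k
      rw [show -((n : ℂ) + 1) + 1 = -n by ring] at h
      rw [h, ← neg_div_neg_eq ((n : ℂ) + 1 - k)]
      ring_nf
    have hden : gosperTerm a (1 - a) (-((n : ℂ) + 1)) (-(3 * (n + 1) : ℂ)) k =
        gosperTerm a (1 - a) (-((n : ℂ) + 1)) (-(3 * n : ℂ)) k *
          ((3 * n + 1 - k) * (3 * n + 2 - k) * (3 * n + 3 - k) /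
            ((3 * n + 1) * (3 * n + 2) * (3 * (n + 1)))) := by
      rw [gosperTerm_denominator_shift (d := -(3 * (n + 1) : ℂ)) (by convert e3 using 1; ring),
        show -(3 * (n + 1) : ℂ) + 1 = -(3 * n + 2) by ring,
        gosperTerm_denominator_shift (d := -(3 * n + 2 : ℂ)) (by convert e2 using 1; ring),
        show -(3 * n + 2 : ℂ) + 1 = -(3 * n + 1) by ring,
        gosperTerm_denominator_shift (d := -(3 * n + 1 : ℂ)) (by convert e1 using 1; ring),
        show -(3 * n + 1 : ℂ) + 1 = -(3 * n) by ring]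
      field_simp
      ring
    have hsucc := gosperTerm_succ a (1 - a) (-((n : ℂ) + 1)) (-(3 * n : ℂ)) k
    rw [Finset.sum_range_succ, ih (by omega)]
    push_cast
    rw [hnum, hden, hsucc]
    generalize gosperTerm a (1 - a) (-((n : ℂ) + 1)) (-(3 * n : ℂ)) k = u
    have e0' : -(3 * n : ℂ) + k ≠ 0 := by convert e0 using 1; ring
    field_simp
    ring

theorem sum_gosperTerm_recurrence (a : ℂ) {n : ℕ} (hn : 1 ≤ n) :
    (n + 1 / 3) * (n + 2 / 3) * ∑ k ∈ Finset.range (n + 2),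
        gosperTerm a (1 - a) (-((n + 1 : ℕ) : ℂ)) (-(3 * (n + 1 : ℕ) : ℂ)) k
      = (n + 1 / 3 + a / 3) * (n + 2 / 3 - a / 3) * ∑ k ∈ Finset.range (n + 1),
        gosperTerm a (1 - a) (-(n : ℂ)) (-(3 * n : ℂ)) k := by
  have h := sum_gosperTerm_recurrence_partial a hn (n + 2) le_rfl
  rw [gosperTerm_neg_natCast_succ, zero_mul, Finset.sum_sub_distrib, ← Finset.mul_sum,
    ← Finset.mul_sum, Finset.sum_range_succ _ (n + 1), Finset.sum_range_succ _ (n + 1),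
    gosperTerm_neg_natCast_succ, add_zero, sub_eq_zero] at h
  rw [Finset.sum_range_succ _ (n + 1)]
  exact h

/-- Gosper's evaluation of `₃F₂(a, 1 - a, -n; 1/2, -3n; 3/4)`. -/
theorem sum_gosperTerm (a : ℂ) (n : ℕ) :
    ∑ k ∈ Finset.range (n + 1), gosperTerm a (1 - a) (-(n : ℂ)) (-(3 * n : ℂ)) k
      = (poch (1 / 3 + a / 3) n * poch (2 / 3 - a / 3) n) / (poch (1 / 3) n * poch (2 / 3) n) := by
  induction n with
  | zero => simp [gosperTerm, poch_zero]
  | succ n ih =>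
    rcases Nat.eq_zero_or_pos n with rfl | hn
    · simp only [Finset.sum_range_succ, Finset.sum_range_zero, gosperTerm, poch_succ, poch_zero]
      norm_num
      ring
    · have p1 : (n : ℂ) + 1 / 3 ≠ 0 := by
        intro h
        have : (3 * n : ℂ) + 1 ≠ 0 := by exact_mod_cast Nat.succ_ne_zero (3 * n)
        exact this (by linear_combination 3 * h)
      have p2 : (n : ℂ) + 2 / 3 ≠ 0 := by
        intro h
        have : (3 * n : ℂ) + 2 ≠ 0 := by exact_mod_cast Nat.succ_ne_zero (3 * n + 1)
        exact this (by linear_combination 3 * h)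
      apply mul_left_cancel₀ (mul_ne_zero p1 p2)
      rw [sum_gosperTerm_recurrence a hn, ih]
      simp only [poch_succ, add_comm _ (n : ℂ)]
      have := poch_third_ne_zero n
      have := poch_two_thirds_ne_zero n
      rw [mul_div_assoc', mul_div_assoc', div_eq_div_iff (by positivity) (by positivity)]
      ring

theorem poch_mul_poch_neg (a : ℂ) (k : ℕ) :
    poch a k * poch (-a) k = 1 / 2 * (poch a k * poch (1 - a) k)
      + 1 / 2 * (poch (-a) k * poch (1 - -a) k) := by
  rcases eq_or_ne a 0 with rfl | ha
  · cases k with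
    | zero => norm_num [poch_zero]
    | succ k =>
      have h : poch 0 (k + 1) = 0 := by simp [poch, Finset.prod_range_succ']
      simp [h]
  · have h1 := poch_mul_add a k
    have h2 := poch_mul_add (-a) k
    rw [show -a + 1 = 1 - a by ring] at h2
    rw [show a + 1 = 1 - -a by ring] at h1
    apply mul_left_cancel₀ ha
    linear_combination (1 / 2 * poch (-a) k) * h1 - (1 / 2 * poch a k) * h2

theorem gosper_first_ext_ell_one (n : ℕ) (x : ℂ) (h6x : 6*x - 1 ≠ 0) :
    ∑ k ∈ Finset.range (n+1),
      (poch (3*x) k * poch (-(3*x)) k * poch (-(n : ℂ)) k) /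
        ((Nat.factorial k : ℂ) * poch (1/2) k * poch (-(3*n : ℂ)) k) * (3/4 : ℂ)^k
      = (1/2 : ℂ) * ((poch (1/3 + x) n * poch (2/3 - x) n) / (poch (1/3) n * poch (2/3) n))
        + (1/2 : ℂ) * ((poch (2/3 + x) n * poch (1/3 - x) n) / (poch (1/3) n * poch (2/3) n)) := by
  have h1 := sum_gosperTerm (3 * x) n
  have h2 := sum_gosperTerm (-(3 * x)) n
  rw [show 1 / 3 + 3 * x / 3 = 1 / 3 + x by ring, show 2 / 3 - 3 * x / 3 = 2 / 3 - x by ring] at h1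
  rw [show 1 / 3 + -(3 * x) / 3 = 1 / 3 - x by ring,
    show 2 / 3 - -(3 * x) / 3 = 2 / 3 + x by ring, mul_comm (poch (1 / 3 - x) n)] at h2
  rw [← h1, ← h2, Finset.mul_sum, Finset.mul_sum, ← Finset.sum_add_distrib]
  refine Finset.sum_congr rfl fun k _ => ?_
  rw [poch_mul_poch_neg]
  simp only [gosperTerm]
  ring
end
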